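/- Let C ⊆ 𝔽₂^n be a binary linear code, X uniform on C, Y^ε the output of BEC(ε), and i ≠ j two coordinates. Then the conditional mutual information satisfies I(X_i ; X_j | Y^ε_{∼i,j}) = Pr(Z^ε ∈ B_4^{ij}) = Q_4, and the conditional entropy satisfies H(X_i | Y^ε_{∼i}) = Q_3 + ε·Q_4 + Q_5, where Q_k = Pr(Z^ε ∈ B_k^{ij}). -/

import Mathlib

open scoped Classical
open Finset

noncomputable section

/-- Vectors in 𝔽₂^n (codewords and binary patterns). -/
abbrev Pattern (n : ℕ) := Fin n → ZMod 2

/-- Hamming weight. -/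
def wH {n : ℕ} (x : Pattern n) : ℕ := hammingNorm x

/-- `z` covers `x` if the support of `x` is contained in the support of `z`. -/
def covers {n : ℕ} (z x : Pattern n) : Prop := ∀ k, x k ≠ 0 → z k ≠ 0

/-- Sample space: a codeword of C together with an erasure pattern (1 = erased). -/
abbrev Samp (n : ℕ) (C : Submodule (ZMod 2) (Pattern n)) := C × Pattern n

/-- Joint probability mass: X uniform on C, coordinates erased i.i.d. with prob. ε. -/
def pmfP {n : ℕ} (C : Submodule (ZMod 2) (Pattern n)) (ε : ℝ) (ω : Samp n C) : ℝ :=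
  (Nat.card C : ℝ)⁻¹ * ε ^ wH ω.2 * (1 - ε) ^ (n - wH ω.2)

/-- The BEC output Y: erased coordinates become `none`. -/
def Yout {n : ℕ} {C : Submodule (ZMod 2) (Pattern n)} (ω : Samp n C) :
    Fin n → Option (ZMod 2) :=
  fun k => if ω.2 k = 1 then none else some (ω.1.1 k)

/-- Y with coordinate i removed. -/
def Ynot {n : ℕ} {C : Submodule (ZMod 2) (Pattern n)} (i : Fin n) (ω : Samp n C) :
    {k : Fin n // k ≠ i} → Option (ZMod 2) :=
  fun k => Yout ω k.1

/-- Y with coordinates i and j removed. -/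
def Ynot2 {n : ℕ} {C : Submodule (ZMod 2) (Pattern n)} (i j : Fin n) (ω : Samp n C) :
    {k : Fin n // k ≠ i ∧ k ≠ j} → Option (ZMod 2) :=
  fun k => Yout ω k.1

/-- Probability of an event under a mass function p. -/
def prE {Ω : Type*} [Fintype Ω] (p : Ω → ℝ) (E : Set Ω) : ℝ :=
  ∑ ω ∈ univ.filter (· ∈ E), p ω

/-- Shannon entropy (in bits) of the random variable f under p. -/
def entr {Ω A : Type*} [Fintype Ω] [Fintype A] (p : Ω → ℝ) (f : Ω → A) : ℝ :=
  -∑ a : A, prE p {ω | f ω = a} * Real.logb 2 (prE p {ω | f ω = a})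

/-- Conditional Shannon entropy H(f | g) in bits. -/
def condEnt {Ω A B : Type*} [Fintype Ω] [Fintype A] [Fintype B]
    (p : Ω → ℝ) (f : Ω → A) (g : Ω → B) : ℝ :=
  -∑ a : A, ∑ b : B,
    prE p {ω | f ω = a ∧ g ω = b} *
      Real.logb 2 (prE p {ω | f ω = a ∧ g ω = b} / prE p {ω | g ω = b})

/-- Mutual information I(f ; g) in bits. -/
def mutInf {Ω A B : Type*} [Fintype Ω] [Fintype A] [Fintype B]
    (p : Ω → ℝ) (f : Ω → A) (g : Ω → B) : ℝ :=
  entr p f - condEnt p f g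

/-- Conditional mutual information I(f ; g | h) in bits. -/
def condMI {Ω A B D : Type*} [Fintype Ω] [Fintype A] [Fintype B] [Fintype D]
    (p : Ω → ℝ) (f : Ω → A) (g : Ω → B) (h : Ω → D) : ℝ :=
  condEnt p f h - condEnt p f (fun ω => (g ω, h ω))

/-- Pr(Z^ε ∈ B) for the random pattern Z^ε = Z^ε(ij) with Z^ε_i = Z^ε_j = 1 and the
remaining coordinates i.i.d. Bernoulli(ε). -/
def probZ {n : ℕ} (ε : ℝ) (i j : Fin n) (B : Set (Pattern n)) : ℝ :=
  ∑ z ∈ univ.filter (fun z : Pattern n => z ∈ B ∧ z i = 1 ∧ z j = 1),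
    ε ^ (univ.filter (fun k => k ≠ i ∧ k ≠ j ∧ z k = 1)).card *
      (1 - ε) ^ (univ.filter (fun k => k ≠ i ∧ k ≠ j ∧ z k = 0)).card

/-- C^{ij}_{ab}(z): codewords c ∈ C with (c_i, c_j) = (a, b) covered by z. -/
def Cab {n : ℕ} (C : Submodule (ZMod 2) (Pattern n)) (i j : Fin n) (a b : ZMod 2)
    (z : Pattern n) : Set (Pattern n) :=
  {c | c ∈ C ∧ c i = a ∧ c j = b ∧ covers z c}

def B1 {n : ℕ} (C : Submodule (ZMod 2) (Pattern n)) (i j : Fin n) : Set (Pattern n) :=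
  {z | Cab C i j 0 1 z = ∅ ∧ Cab C i j 1 0 z = ∅ ∧ Cab C i j 1 1 z = ∅}

def B2 {n : ℕ} (C : Submodule (ZMod 2) (Pattern n)) (i j : Fin n) : Set (Pattern n) :=
  {z | Cab C i j 0 1 z ≠ ∅ ∧ Cab C i j 1 0 z = ∅ ∧ Cab C i j 1 1 z = ∅}

def B3 {n : ℕ} (C : Submodule (ZMod 2) (Pattern n)) (i j : Fin n) : Set (Pattern n) :=
  {z | Cab C i j 1 0 z ≠ ∅ ∧ Cab C i j 0 1 z = ∅ ∧ Cab C i j 1 1 z = ∅}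

def B4 {n : ℕ} (C : Submodule (ZMod 2) (Pattern n)) (i j : Fin n) : Set (Pattern n) :=
  {z | Cab C i j 1 1 z ≠ ∅ ∧ Cab C i j 0 1 z = ∅ ∧ Cab C i j 1 0 z = ∅}

def B5 {n : ℕ} (C : Submodule (ZMod 2) (Pattern n)) (i j : Fin n) : Set (Pattern n) :=
  {z | Cab C i j 0 1 z ≠ ∅ ∧ Cab C i j 1 0 z ≠ ∅ ∧ Cab C i j 1 1 z ≠ ∅}

/-!
Let `E` be the erasure pattern. Knowing which positions are erased, the receiver of `X` learns
exactly the coset of `X` modulo the subcode `C(E)` of codewords covered by `E`. Since `X` is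
uniform, `X_i` is then either determined or a fair bit, so its conditional entropy is the
probability that some codeword of `C(E)` has `i`-th bit `1`.

Deleting a coordinate from the output amounts to erasing it, and revealing it to clearing its
erasure, so the entropies of `X_i` given `Y_{∼i,j}` alone and given `X_j` in addition are also of
this form, with `E_i`, `E_j` forced to `1, 1` and to `1, 0`. In the first case the modified pattern
has the law of `Z^ε`, and since `C(E)` is closed under addition `X_i` is undetermined exactly on
`B_3 ∪ B_4 ∪ B_5`; in the second it is undetermined exactly on `B_3 ∪ B_5`. Finally `Y_{∼i}` shows
`X_j` with probability `1 - ε`, so the entropy of `X_i` given `Y_{∼i}` is the mixture of the two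
with weights `ε` and `1 - ε`.
-/

section Entropy

variable {Ω A B : Type*} [Fintype Ω] [Fintype A] [Fintype B]

lemma prE_union_of_disjoint (p : Ω → ℝ) {E F : Set Ω} (h : Disjoint E F) :
    prE p (E ∪ F) = prE p E + prE p F := by
  unfold prE
  rw [← sum_union (disjoint_filter.2 fun ω _ hE hF => Set.disjoint_left.1 h hE hF), ← filter_or]
  simp only [Set.mem_union]

lemma prE_const (c : ℝ) (E : Set Ω) : prE (fun _ => c) E = E.ncard * c := by
  rw [prE, sum_const, nsmul_eq_mul, Set.ncard_eq_toFinset_card' E, ← Set.toFinset_univ]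
  congr 3
  ext ω
  simp

lemma prE_mul_prod (p : A → ℝ) (w : B → ℝ) (E : Set A) (F : Set B) :
    prE (fun ω : A × B => p ω.1 * w ω.2) (E ×ˢ F) = prE p E * prE w F := by
  unfold prE
  rw [sum_mul_sum, ← sum_product']
  congr 1
  ext ω
  simp

lemma prE_pos {p : Ω → ℝ} (hp : 0 ≤ p) {E : Set Ω} {ω : Ω} (hω : ω ∈ E) (hpω : p ω ≠ 0) :
    0 < prE p E :=
  sum_pos' (fun ω' _ => hp ω') ⟨ω, by simpa using hω, (hp ω).lt_of_ne' hpω⟩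

lemma sum_prE_fiber_mul (p : Ω → ℝ) (f : Ω → A) (L : A → ℝ) :
    ∑ a, prE p {ω | f ω = a} * L a = ∑ ω, p ω * L (f ω) := by
  rw [← sum_fiberwise univ f]
  refine sum_congr rfl fun a _ => ?_
  rw [prE, sum_mul]
  refine sum_congr rfl fun ω hω => ?_
  rw [show f ω = a by simpa using hω]

lemma condEnt_eq_neg_sum (p : Ω → ℝ) (f : Ω → A) (g : Ω → B) :
    condEnt p f g = -∑ ω, p ω *
      Real.logb 2 (prE p {ω' | f ω' = f ω ∧ g ω' = g ω} / prE p {ω' | g ω' = g ω}) := by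
  rw [← sum_prE_fiber_mul p (fun ω => (f ω, g ω)) fun ab =>
    Real.logb 2 (prE p {ω | f ω = ab.1 ∧ g ω = ab.2} / prE p {ω | g ω = ab.2}),
    Fintype.sum_prod_type]
  simp only [Prod.mk.injEq]
  rfl

lemma condEnt_congr_right {B' : Type*} [Fintype B'] (p : Ω → ℝ) (f : Ω → A) {g : Ω → B}
    {g' : Ω → B'} (h : ∀ ω ω', g ω' = g ω ↔ g' ω' = g' ω) :
    condEnt p f g = condEnt p f g' := by
  simp only [condEnt_eq_neg_sum, h]

end Entropy

section UniformOnGroup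

variable {V A : Type*} [AddGroup V] [AddGroup A]

lemma ncard_setOf_sub_mem (K : AddSubgroup V) (x : V) :
    {y | y - x ∈ K}.ncard = Nat.card K := by
  have himage : {y | y - x ∈ K} = (· + x) '' (K : Set V) := by
    ext y
    simp [← sub_eq_add_neg]
  rw [himage, Set.ncard_image_of_injective _ (add_left_injective x)]
  rfl

lemma card_map_mul_card_ker_inf (ℓ : V →+ A) (K : AddSubgroup V) :
    Nat.card (K.map ℓ) * Nat.card (ℓ.ker ⊓ K : AddSubgroup V) = Nat.card K := by
  rw [← AddSubgroup.relIndex_ker, ← AddSubgroup.inf_relIndex_right,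
    ← AddSubgroup.relIndex_bot_left (ℓ.ker ⊓ K), ← AddSubgroup.relIndex_bot_left K, mul_comm,
    AddSubgroup.relIndex_mul_relIndex _ _ _ bot_le inf_le_right]

lemma ncard_fiber_inter_coset_div_ncard_coset [Finite V] (ℓ : V →+ A) (K : AddSubgroup V) (x : V) :
    ({y | ℓ y = ℓ x ∧ y - x ∈ K}.ncard : ℝ) / {y | y - x ∈ K}.ncard =
      (Nat.card (K.map ℓ) : ℝ)⁻¹ := by
  have hfiber : {y | ℓ y = ℓ x ∧ y - x ∈ K} = {y | y - x ∈ ℓ.ker ⊓ K} := by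
    ext y
    simp [AddMonoidHom.mem_ker, sub_eq_zero]
  have hker : (Nat.card (ℓ.ker ⊓ K : AddSubgroup V) : ℝ) ≠ 0 := by
    exact_mod_cast Nat.card_pos.ne'
  rw [hfiber, ncard_setOf_sub_mem, ncard_setOf_sub_mem, ← card_map_mul_card_ker_inf ℓ K,
    Nat.cast_mul, div_mul_cancel_right₀ hker]

variable [Fintype V] {S B T : Type*} [Fintype S] {w : S → ℝ}

lemma prE_hom_and_obs_div_prE_obs (hw : 0 ≤ w) (ℓ : V →+ A) (K : S → AddSubgroup V) (u : S → T)
    {g : V × S → B} (hg : ∀ ω ω', g ω' = g ω ↔ ω'.1 - ω.1 ∈ K ω.2 ∧ u ω'.2 = u ω.2)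
    (x : V) {s : S} (hs : w s ≠ 0) :
    prE (fun ω : V × S => (Nat.card V : ℝ)⁻¹ * w ω.2) {ω | ℓ ω.1 = ℓ x ∧ g ω = g (x, s)} /
      prE (fun ω : V × S => (Nat.card V : ℝ)⁻¹ * w ω.2) {ω | g ω = g (x, s)} =
        (Nat.card ((K s).map ℓ) : ℝ)⁻¹ := by
  have hV : (Nat.card V : ℝ)⁻¹ ≠ 0 := inv_ne_zero (by exact_mod_cast Nat.card_pos.ne')
  have hu : prE w {t | u t = u s} ≠ 0 := (prE_pos hw (ω := s) (by simp) hs).ne'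
  have hden : {ω | g ω = g (x, s)} = {y | y - x ∈ K s} ×ˢ {t | u t = u s} :=
    Set.ext fun ω => hg (x, s) ω
  have hnum : {ω | ℓ ω.1 = ℓ x ∧ g ω = g (x, s)} =
      {y | ℓ y = ℓ x ∧ y - x ∈ K s} ×ˢ {t | u t = u s} :=
    Set.ext fun ω => (and_congr_right fun _ => hg (x, s) ω).trans and_assoc.symm
  rw [hnum, hden, prE_mul_prod (fun _ => (Nat.card V : ℝ)⁻¹) w,
    prE_mul_prod (fun _ => (Nat.card V : ℝ)⁻¹) w, prE_const, prE_const,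
    mul_div_mul_right _ _ hu, mul_div_mul_right _ _ hV, ncard_fiber_inter_coset_div_ncard_coset]

/-- If `X` is uniform on `V` and the observation consists of `u S` and of the coset of `X` modulo
a random subgroup `K S`, then `ℓ X` is conditionally uniform on a coset of `ℓ (K S)`. -/
theorem condEnt_hom_eq_sum_logb_card_map [Fintype A] [Fintype B] (hw : 0 ≤ w) (ℓ : V →+ A)
    (K : S → AddSubgroup V) (u : S → T) {g : V × S → B}
    (hg : ∀ ω ω', g ω' = g ω ↔ ω'.1 - ω.1 ∈ K ω.2 ∧ u ω'.2 = u ω.2) :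
    condEnt (fun ω : V × S => (Nat.card V : ℝ)⁻¹ * w ω.2) (fun ω => ℓ ω.1) g =
      ∑ s, w s * Real.logb 2 (Nat.card ((K s).map ℓ)) := by
  have hV : (Nat.card V : ℝ) ≠ 0 := by exact_mod_cast Nat.card_pos.ne'
  rw [condEnt_eq_neg_sum, Fintype.sum_prod_type, sum_comm, ← sum_neg_distrib]
  refine sum_congr rfl fun s _ => ?_
  by_cases hs : w s = 0
  · simp [hs]
  · simp only [prE_hom_and_obs_div_prE_obs hw ℓ K u hg _ hs, Real.logb_inv, sum_const,
      nsmul_eq_mul, card_univ, ← Nat.card_eq_fintype_card]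
    field_simp

end UniformOnGroup

section ProductMass

variable {ι α : Type*} [Fintype ι]

/-- The joint mass function of independent letters, the `k`-th of which has mass function `q k`. -/
def productMass (q : ι → α → ℝ) (z : ι → α) : ℝ := ∏ k, q k (z k)

lemma productMass_nonneg {q : ι → α → ℝ} (hq : 0 ≤ q) : 0 ≤ productMass q :=
  fun z => prod_nonneg fun k _ => hq k (z k)

variable [Fintype α] [DecidableEq ι]

lemma prE_productMass_eq_sum (q : ι → α → ℝ) (j : ι) (E : Set (ι → α)) :
    prE (productMass q) E = ∑ a, q j a * ∑ y : {k // k ≠ j} → α,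
      if (Equiv.funSplitAt j α).symm (a, y) ∈ E then ∏ k : {k // k ≠ j}, q k (y k) else 0 := by
  rw [prE, sum_filter, ← (Equiv.funSplitAt j α).symm.sum_comp, Fintype.sum_prod_type]
  refine sum_congr rfl fun a _ => ?_
  rw [mul_sum]
  refine sum_congr rfl fun y _ => ?_
  rw [mul_ite, mul_zero, productMass, Fintype.prod_eq_mul_prod_subtype_ne _ j]
  have hrest (k : {k // k ≠ j}) : (Equiv.funSplitAt j α).symm (a, y) k = y k := by
    simp [k.2]
  simp [hrest]

theorem prE_productMass_update (q : ι → α → ℝ) {j : ι} (hj : ∑ b, q j b = 1) (r : α → ℝ)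
    (E : Set (ι → α)) :
    prE (productMass (Function.update q j r)) E =
      ∑ a, r a * prE (productMass q) {z | Function.update z j a ∈ E} := by
  rw [prE_productMass_eq_sum _ j]
  refine sum_congr rfl fun a _ => ?_
  rw [prE_productMass_eq_sum _ j, Function.update_self]
  have hupdate (b : α) (y : {k // k ≠ j} → α) :
      Function.update ((Equiv.funSplitAt j α).symm (b, y)) j a =
        (Equiv.funSplitAt j α).symm (a, y) := by
    ext k
    by_cases hk : k = j <;> simp [hk]
  have hrest (k : {k // k ≠ j}) : Function.update q j r k = q k := Function.update_of_ne k.2 _ _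
  simp only [Set.mem_ofPred_eq, hupdate, hrest, ← sum_mul, hj, one_mul]

lemma prE_productMass_update_single [DecidableEq α] (q : ι → α → ℝ) {j : ι}
    (hj : ∑ b, q j b = 1) (a : α) (E : Set (ι → α)) :
    prE (productMass (Function.update q j (Pi.single a 1))) E =
      prE (productMass q) {z | Function.update z j a ∈ E} := by
  rw [prE_productMass_update q hj, sum_eq_single a] <;> simp +contextual

lemma prE_productMass_eq_sum_update (q : ι → α → ℝ) {j : ι} (hj : ∑ b, q j b = 1)
    (E : Set (ι → α)) :
    prE (productMass q) E =
      ∑ a, q j a * prE (productMass q) {z | Function.update z j a ∈ E} := by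
  rw [← prE_productMass_update q hj, Function.update_eq_self]

end ProductMass

section ErasurePattern

lemma zmod_two_eq_zero_or_one (a : ZMod 2) : a = 0 ∨ a = 1 := by
  revert a
  decide

lemma zmod_two_ne_zero_iff (a : ZMod 2) : a ≠ 0 ↔ a = 1 := by
  revert a
  decide

lemma zmod_two_ne_one_iff (a : ZMod 2) : a ≠ 1 ↔ a = 0 := by
  revert a
  decide

lemma zmod_two_univ : (univ : Finset (ZMod 2)) = {0, 1} := by
  decide

/-- The mass function of a Bernoulli(`ε`) bit. -/
def bernoulliMass (ε : ℝ) (a : ZMod 2) : ℝ := if a = 1 then ε else 1 - ε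

lemma sum_bernoulliMass (ε : ℝ) : ∑ a, bernoulliMass ε a = 1 := by
  simp [bernoulliMass, zmod_two_univ]

lemma prod_bernoulliMass {ι : Type*} (ε : ℝ) (s : Finset ι) (z : ι → ZMod 2) :
    ∏ k ∈ s, bernoulliMass ε (z k) = ε ^ #{k ∈ s | z k = 1} * (1 - ε) ^ #{k ∈ s | z k = 0} := by
  simp only [bernoulliMass, prod_ite, prod_const, ← ne_eq, zmod_two_ne_one_iff]

variable {n : ℕ}

/-- The mass function of the erasure pattern of `BEC(ε)`. -/
def erasureMass (ε : ℝ) : Pattern n → ℝ := productMass fun _ => bernoulliMass ε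

lemma erasureMass_nonneg {ε : ℝ} (hε : ε ∈ Set.Icc (0 : ℝ) 1) :
    0 ≤ (erasureMass ε : Pattern n → ℝ) := by
  refine productMass_nonneg fun _ a => ?_
  unfold bernoulliMass
  split_ifs
  exacts [hε.1, sub_nonneg.2 hε.2]

lemma erasureMass_eq (ε : ℝ) (z : Pattern n) :
    erasureMass ε z = ε ^ wH z * (1 - ε) ^ (n - wH z) := by
  have hones : wH z = #{k | z k = 1} := by simp only [wH, hammingNorm, zmod_two_ne_zero_iff]
  have hzeros : #{k | z k = 0} = n - wH z := by
    have hsplit := card_filter_add_card_filter_not (s := univ) fun k => z k = 0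
    rw [card_univ, Fintype.card_fin] at hsplit
    exact Nat.eq_sub_of_add_eq hsplit
  rw [erasureMass, productMass, prod_bernoulliMass, hzeros, hones]

lemma pmfP_eq (C : Submodule (ZMod 2) (Pattern n)) (ε : ℝ) :
    pmfP C ε = fun ω => (Nat.card C : ℝ)⁻¹ * erasureMass ε ω.2 := by
  ext ω
  rw [pmfP, erasureMass_eq, mul_assoc]

lemma prE_erasureMass_eq_update (ε : ℝ) (j : Fin n) (E : Set (Pattern n)) :
    prE (erasureMass ε) E = ε * prE (erasureMass ε) {z | Function.update z j 1 ∈ E} +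
      (1 - ε) * prE (erasureMass ε) {z | Function.update z j 0 ∈ E} := by
  rw [erasureMass, prE_productMass_eq_sum_update _ (sum_bernoulliMass ε) (j := j),
    zmod_two_univ, sum_pair zero_ne_one, add_comm]
  simp [bernoulliMass]

/-- The mass function of `Z^ε(ij)`: the coordinates `i` and `j` are almost surely erased. -/
def forcedErasureMass (ε : ℝ) (i j : Fin n) : Pattern n → ℝ :=
  productMass (Function.update (Function.update (fun _ => bernoulliMass ε) j (Pi.single 1 1))
    i (Pi.single 1 1))

lemma forcedErasureMass_eq (ε : ℝ) (i j : Fin n) (z : Pattern n) :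
    forcedErasureMass ε i j z = if z i = 1 ∧ z j = 1 then
      ε ^ #{k | k ≠ i ∧ k ≠ j ∧ z k = 1} * (1 - ε) ^ #{k | k ≠ i ∧ k ≠ j ∧ z k = 0} else 0 := by
  have hforced (k : Fin n) : Function.update (Function.update (fun _ => bernoulliMass ε)
      j (Pi.single 1 1)) i (Pi.single 1 1) k (z k) =
      if k ≠ i ∧ k ≠ j then bernoulliMass ε (z k) else if z k = 1 then 1 else 0 := by
    by_cases hki : k = i <;> by_cases hkj : k = j <;>
      simp [hki, hkj, Function.update_apply, Pi.single_apply]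
  have hall : (∀ k, ¬(k ≠ i ∧ k ≠ j) → z k = 1) ↔ z i = 1 ∧ z j = 1 := by
    simp only [not_and_or, not_not, or_imp, forall_and, forall_eq]
  rw [forcedErasureMass, productMass, prod_congr rfl fun k _ => hforced k, prod_ite,
    prod_bernoulliMass, filter_filter, filter_filter, prod_ite_zero, prod_const_one]
  simp only [mem_filter, mem_univ, true_and, hall, and_assoc, mul_ite, mul_one, mul_zero]

lemma probZ_eq_prE_forcedErasureMass (ε : ℝ) (i j : Fin n) (B : Set (Pattern n)) :
    probZ ε i j B = prE (forcedErasureMass ε i j) B := by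
  simp only [probZ, prE, forcedErasureMass_eq, ← sum_filter, filter_filter]

theorem probZ_eq_prE_erasureMass (ε : ℝ) (i j : Fin n) (B : Set (Pattern n)) :
    probZ ε i j B =
      prE (erasureMass ε) {z | Function.update (Function.update z j 1) i 1 ∈ B} := by
  have hi : ∑ a, Function.update (fun _ => bernoulliMass ε) j (Pi.single 1 1) i a = 1 := by
    rw [Function.update_apply]
    split_ifs <;> simp [sum_bernoulliMass]
  rw [probZ_eq_prE_forcedErasureMass, forcedErasureMass, prE_productMass_update_single _ hi,
    prE_productMass_update_single (fun _ => bernoulliMass ε) (sum_bernoulliMass ε)]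
  rfl

lemma probZ_union_of_disjoint (ε : ℝ) (i j : Fin n) {B B' : Set (Pattern n)}
    (h : Disjoint B B') : probZ ε i j (B ∪ B') = probZ ε i j B + probZ ε i j B' := by
  simp only [probZ_eq_prE_forcedErasureMass, prE_union_of_disjoint _ h]

end ErasurePattern

section Code

variable {n : ℕ} (C : Submodule (ZMod 2) (Pattern n)) {i j : Fin n}

/-- The codewords covered by `z`, i.e. `C(z)`: the differences of codewords that agree on all
unerased positions of the erasure pattern `z`. -/
def coveredSubcode (z : Pattern n) : AddSubgroup C where
  carrier := {c | covers z c}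
  zero_mem' k hk := absurd rfl hk
  add_mem' {c d} hc hd k hk := by
    by_cases hck : c.1 k = 0
    · exact hd k fun hdk => hk (by simp [hck, hdk])
    · exact hc k hck
  neg_mem' {c} hc k hk := hc k (by simpa using hk)

/-- The erasure patterns that leave the `i`-th bit of a codeword undetermined. -/
def undetermined (i : Fin n) : Set (Pattern n) := {z | ∃ c ∈ C, c i = 1 ∧ covers z c}

lemma Yout_eq_Yout_iff (ω ω' : Samp n C) :
    Yout ω' = Yout ω ↔ ω'.1 - ω.1 ∈ coveredSubcode C ω.2 ∧ ω'.2 = ω.2 := by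
  have hcoord (k : Fin n) : Yout ω' k = Yout ω k ↔
      ((ω'.1 - ω.1).1 k ≠ 0 → ω.2 k ≠ 0) ∧ ω'.2 k = ω.2 k := by
    have hdiff : ((ω'.1 - ω.1).1 k ≠ 0 → ω.2 k ≠ 0) ↔ (ω.2 k = 0 → ω'.1.1 k = ω.1.1 k) := by
      rw [not_imp_not, ← sub_eq_zero (a := ω'.1.1 k)]
      rfl
    rw [hdiff]
    rcases zmod_two_eq_zero_or_one (ω.2 k) with h | h <;>
      rcases zmod_two_eq_zero_or_one (ω'.2 k) with h' | h' <;> simp [Yout, h, h']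
  simp only [funext_iff, hcoord, forall_and]
  rfl

lemma logb_card_addSubgroup_zmod_two (K : AddSubgroup (ZMod 2)) :
    Real.logb 2 (Nat.card K) = if 1 ∈ K then 1 else 0 := by
  have := Fact.mk (show (Nat.card (ZMod 2)).Prime by simpa using Nat.prime_two)
  rcases K.eq_bot_or_eq_top_of_prime_card with rfl | rfl <;> simp

theorem condEnt_Yout {ε : ℝ} (hε : ε ∈ Set.Icc (0 : ℝ) 1) (i : Fin n)
    (u : Pattern n → Pattern n) :
    condEnt (pmfP C ε) (fun ω => ω.1.1 i) (fun ω => Yout (C := C) (ω.1, u ω.2)) =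
      prE (erasureMass ε) {z | u z ∈ undetermined C i} := by
  let coord : C →+ ZMod 2 := (Pi.evalAddMonoidHom _ i).comp C.subtype.toAddMonoidHom
  have hmem (z : Pattern n) : 1 ∈ (coveredSubcode C z).map coord ↔ z ∈ undetermined C i := by
    constructor
    · rintro ⟨c, hcz, hci⟩
      exact ⟨c, c.2, hci, hcz⟩
    · rintro ⟨c, hc, hci, hcz⟩
      exact ⟨⟨c, hc⟩, hcz, hci⟩
  rw [pmfP_eq]
  refine (condEnt_hom_eq_sum_logb_card_map (erasureMass_nonneg hε) coord
    (fun z => coveredSubcode C (u z)) u fun ω ω' => Yout_eq_Yout_iff C _ _).trans ?_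
  simp only [logb_card_addSubgroup_zmod_two, hmem, mul_ite, mul_one, mul_zero, ← sum_filter]
  rfl

lemma condEnt_coord_Ynot {ε : ℝ} (hε : ε ∈ Set.Icc (0 : ℝ) 1) (i : Fin n) :
    condEnt (pmfP C ε) (fun ω => ω.1.1 i) (Ynot i) =
      prE (erasureMass ε) {z | Function.update z i 1 ∈ undetermined C i} := by
  rw [← condEnt_Yout C hε]
  refine condEnt_congr_right _ _ fun ω ω' => ?_
  simp only [funext_iff, Ynot, Subtype.forall]
  refine forall_congr' fun k => ?_
  by_cases hk : k = i <;> simp [Yout, hk]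

lemma condEnt_coord_Ynot2 {ε : ℝ} (hε : ε ∈ Set.Icc (0 : ℝ) 1) (i j : Fin n) :
    condEnt (pmfP C ε) (fun ω => ω.1.1 i) (Ynot2 i j) =
      prE (erasureMass ε)
        {z | Function.update (Function.update z j 1) i 1 ∈ undetermined C i} := by
  rw [← condEnt_Yout C hε i fun z => Function.update (Function.update z j 1) i 1]
  refine condEnt_congr_right _ _ fun ω ω' => ?_
  simp only [funext_iff, Ynot2, Subtype.forall]
  refine forall_congr' fun k => ?_
  by_cases hi : k = i <;> by_cases hj : k = j <;> simp [Yout, Function.update_apply, hi, hj]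

lemma condEnt_coord_coord_Ynot2 {ε : ℝ} (hε : ε ∈ Set.Icc (0 : ℝ) 1) (hij : i ≠ j) :
    condEnt (pmfP C ε) (fun ω => ω.1.1 i) (fun ω => (ω.1.1 j, Ynot2 i j ω)) =
      prE (erasureMass ε)
        {z | Function.update (Function.update z j 0) i 1 ∈ undetermined C i} := by
  rw [← condEnt_Yout C hε i fun z => Function.update (Function.update z j 0) i 1]
  refine condEnt_congr_right _ _ fun ω ω' => ?_
  simp only [Prod.mk.injEq, funext_iff, Ynot2, Subtype.forall]
  rw [← forall_eq (p := fun k => ω'.1.1 k = ω.1.1 k), ← forall_and]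
  refine forall_congr' fun k => ?_
  by_cases hi : k = i <;> by_cases hj : k = j <;> simp_all [Yout]

variable {C}

lemma Cab_add_nonempty {z : Pattern n} {a b a' b' : ZMod 2} (h : (Cab C i j a b z).Nonempty)
    (h' : (Cab C i j a' b' z).Nonempty) : (Cab C i j (a + a') (b + b') z).Nonempty := by
  obtain ⟨c, hc, rfl, rfl, hcz⟩ := h
  obtain ⟨d, hd, rfl, rfl, hdz⟩ := h'
  exact ⟨c + d, C.add_mem hc hd, rfl, rfl,
    (coveredSubcode C z).add_mem (x := ⟨c, hc⟩) (y := ⟨d, hd⟩) hcz hdz⟩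

lemma mem_undetermined_iff (j : Fin n) {z : Pattern n} : z ∈ undetermined C i ↔
    (Cab C i j 1 0 z).Nonempty ∨ (Cab C i j 1 1 z).Nonempty := by
  constructor
  · rintro ⟨c, hc, hci, hcz⟩
    exact (zmod_two_eq_zero_or_one (c j)).imp (fun hcj => ⟨c, hc, hci, hcj, hcz⟩)
      fun hcj => ⟨c, hc, hci, hcj, hcz⟩
  · rintro (⟨c, hc, hci, -, hcz⟩ | ⟨c, hc, hci, -, hcz⟩) <;> exact ⟨c, hc, hci, hcz⟩

lemma covers_update_zero_iff {z c : Pattern n} :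
    covers (Function.update z j 0) c ↔ c j = 0 ∧ covers z c := by
  simp only [covers, Function.update_apply]
  constructor
  · intro h
    exact ⟨by_contra fun hcj => h j hcj (if_pos rfl), fun k hk hzk => h k hk (by simp [hzk])⟩
  · rintro ⟨hcj, hcz⟩ k hk
    rw [if_neg fun hkj : k = j => hk (hkj ▸ hcj)]
    exact hcz k hk

lemma update_zero_mem_undetermined_iff {z : Pattern n} :
    Function.update z j 0 ∈ undetermined C i ↔ (Cab C i j 1 0 z).Nonempty := by
  simp only [undetermined, Cab, Set.Nonempty, Set.mem_ofPred_eq, covers_update_zero_iff]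

lemma Cab_nonempty_third_of_two (z : Pattern n) :
    ((Cab C i j 0 1 z).Nonempty → (Cab C i j 1 0 z).Nonempty → (Cab C i j 1 1 z).Nonempty) ∧
    ((Cab C i j 0 1 z).Nonempty → (Cab C i j 1 1 z).Nonempty → (Cab C i j 1 0 z).Nonempty) ∧
    ((Cab C i j 1 0 z).Nonempty → (Cab C i j 1 1 z).Nonempty → (Cab C i j 0 1 z).Nonempty) :=
  ⟨Cab_add_nonempty, Cab_add_nonempty, Cab_add_nonempty⟩

lemma undetermined_eq_B3_union_B4_union_B5 (i j : Fin n) :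
    undetermined C i = B3 C i j ∪ B4 C i j ∪ B5 C i j := by
  ext z
  have := Cab_nonempty_third_of_two (C := C) (i := i) (j := j) z
  simp only [mem_undetermined_iff j, B3, B4, B5, Set.mem_union, Set.mem_ofPred_eq, ne_eq,
    ← Set.not_nonempty_iff_eq_empty, not_not]
  tauto

lemma setOf_update_zero_mem_undetermined (i j : Fin n) :
    {z | Function.update z j 0 ∈ undetermined C i} = B3 C i j ∪ B5 C i j := by
  ext z
  have := Cab_nonempty_third_of_two (C := C) (i := i) (j := j) z
  simp only [update_zero_mem_undetermined_iff, B3, B5, Set.mem_union, Set.mem_ofPred_eq, ne_eq,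
    ← Set.not_nonempty_iff_eq_empty, not_not]
  tauto

lemma disjoint_B3_B4 : Disjoint (B3 C i j) (B4 C i j) :=
  Set.disjoint_left.2 fun _ h3 h4 => h3.1 h4.2.2

lemma disjoint_B3_B5 : Disjoint (B3 C i j) (B5 C i j) :=
  Set.disjoint_left.2 fun _ h3 h5 => h5.1 h3.2.1

lemma disjoint_B4_B5 : Disjoint (B4 C i j) (B5 C i j) :=
  Set.disjoint_left.2 fun _ h4 h5 => h5.1 h4.2.1

variable (C)

theorem condEnt_coord_Ynot2_eq_probZ {ε : ℝ} (hε : ε ∈ Set.Icc (0 : ℝ) 1) (i j : Fin n) :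
    condEnt (pmfP C ε) (fun ω => ω.1.1 i) (Ynot2 i j) =
      probZ ε i j (B3 C i j) + probZ ε i j (B4 C i j) + probZ ε i j (B5 C i j) := by
  rw [condEnt_coord_Ynot2 C hε, ← probZ_eq_prE_erasureMass,
    undetermined_eq_B3_union_B4_union_B5 i j,
    probZ_union_of_disjoint _ _ _ (disjoint_B3_B5.union_left disjoint_B4_B5),
    probZ_union_of_disjoint _ _ _ disjoint_B3_B4]

theorem condEnt_coord_coord_Ynot2_eq_probZ {ε : ℝ} (hε : ε ∈ Set.Icc (0 : ℝ) 1) (hij : i ≠ j) :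
    condEnt (pmfP C ε) (fun ω => ω.1.1 i) (fun ω => (ω.1.1 j, Ynot2 i j ω)) =
      probZ ε i j (B3 C i j) + probZ ε i j (B5 C i j) := by
  have hreveal (z : Pattern n) : Function.update (Function.update z j 0) i 1 =
      Function.update (Function.update (Function.update z j 1) i 1) j 0 := by
    rw [Function.update_comm hij, Function.update_idem]
  rw [condEnt_coord_coord_Ynot2 C hε hij, ← probZ_union_of_disjoint _ _ _ disjoint_B3_B5,
    ← setOf_update_zero_mem_undetermined, probZ_eq_prE_erasureMass]
  simp only [hreveal, Set.mem_ofPred_eq]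

/-- The observer of `Y^ε_{∼i}` sees `X_j` with probability `1 - ε`, independently of the rest. -/
theorem condEnt_coord_Ynot_eq_mix {ε : ℝ} (hε : ε ∈ Set.Icc (0 : ℝ) 1) (hij : i ≠ j) :
    condEnt (pmfP C ε) (fun ω => ω.1.1 i) (Ynot i) =
      ε * condEnt (pmfP C ε) (fun ω => ω.1.1 i) (Ynot2 i j) +
        (1 - ε) * condEnt (pmfP C ε) (fun ω => ω.1.1 i) (fun ω => (ω.1.1 j, Ynot2 i j ω)) := by
  rw [condEnt_coord_Ynot C hε, condEnt_coord_Ynot2 C hε, condEnt_coord_coord_Ynot2 C hε hij]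
  exact prE_erasureMass_eq_update ε j _

end Code

theorem condMI_eq_Q4_and_condEnt (n : ℕ) (C : Submodule (ZMod 2) (Pattern n))
    (ε : ℝ) (hε : ε ∈ Set.Ioo (0 : ℝ) 1) (i j : Fin n) (hij : i ≠ j) :
    condMI (pmfP C ε) (fun ω => ω.1.1 i) (fun ω => ω.1.1 j) (Ynot2 i j) =
      probZ ε i j (B4 C i j) ∧
    condEnt (pmfP C ε) (fun ω => ω.1.1 i) (Ynot i) =
      probZ ε i j (B3 C i j) + ε * probZ ε i j (B4 C i j) + probZ ε i j (B5 C i j) := by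
  have hε' := Set.Ioo_subset_Icc_self hε
  have hYnot2 := condEnt_coord_Ynot2_eq_probZ C hε' i j
  have hXYnot2 := condEnt_coord_coord_Ynot2_eq_probZ C hε' hij
  constructor
  · rw [condMI, hYnot2, hXYnot2]
    ring
  · rw [condEnt_coord_Ynot_eq_mix C hε' hij, hYnot2, hXYnot2]
    ring

end
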